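/- Let f: ℂ^{n+1} → ℂ be a reduced polynomial whose peripheral complex R• is a torsion Γ-module complex, and let e(t) = det(ρ) be the determinant of the invertible matrix ρ appearing in the four-term exact sequence 0 → Γ^μ →ρ Γ^μ ⊕ \overline{H_n(U^c)} → H_n(M^c) → H_n(U^c) → 0. Then, up to multiplication by units of Γ, e(t) · δ_n(U,t) · δ_n(U,t^{-1}) = δ_n(M,t). -/

import Mathlib

/-!
Define the order of a module `M` to be the determinant `det A` of a square presentation
`0 → F → F → M → 0` with `F` finite free. By Schanuel's lemma any two such presentations become
isomorphic after adding a free summand to each, so the order is well defined up to units; on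
`∏ Γ ⧸ (dᵢ)` the diagonal presentation gives `∏ dᵢ`, and conjugating a module by `t ↦ t⁻¹`
conjugates the entries of its presentation.

Orders multiply along `F → F × N → M → 0` with injective first component `ρ : F → F`: lifting
`F → N` to a presentation of `N` yields a block triangular presentation of `M` with determinant
`det ρ` times the order of `N`. Extensions reduce to the same block form, by lifting the generators
of the quotient. Splitting the four-term sequence at `range p` and applying the two rules gives
`det ρ · δ_n(U,t⁻¹) · δ_n(U,t)` as an order of `H_n(M^c)`.
-/

/-!
STATEMENT 4. Let `f : ℂ^{n+1} → ℂ` be a reduced polynomial whose peripheral complex `R•`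
is a torsion `Γ`-module complex, and let `e(t) = det(ρ)` be the determinant of the
invertible matrix `ρ` appearing in the four-term exact sequence
`0 → Γ^μ →ρ Γ^μ ⊕ \overline{H_n(U^c)} → H_n(M^c) → H_n(U^c) → 0`.
Then, up to multiplication by units of `Γ`:
`e(t) · δ_n(U,t) · δ_n(U,t⁻¹) = δ_n(M,t)`.
-/

noncomputable section

open LaurentPolynomial

/-- The ring `Γ = ℚ[t,t⁻¹]` of rational Laurent polynomials; `t = T 1`. -/
abbrev Γ : Type := LaurentPolynomial ℚ

/-- A module over `Γ = ℚ[t,t⁻¹]`, packaging e.g. an Alexander module. -/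
structure GammaMod : Type 1 where
  carrier : Type
  [isAddCommGroup : AddCommGroup carrier]
  [isModule : Module Γ carrier]

attribute [instance] GammaMod.isAddCommGroup GammaMod.isModule

/-- The involution `t ↦ t⁻¹` of `Γ = ℚ[t,t⁻¹]`. -/
def gammaBar : Γ ≃ₐ[ℚ] Γ := LaurentPolynomial.invert

/-- `Conj N` is the `Γ`-module `\overline{N}`: the abelian group `N` with the `Γ`-action
composed with the involution `t ↦ t⁻¹`. -/
def Conj (N : Type) : Type := N

instance (N : Type) [AddCommGroup N] : AddCommGroup (Conj N) :=
  inferInstanceAs (AddCommGroup N)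

instance (N : Type) [AddCommGroup N] [Module Γ N] : Module Γ (Conj N) :=
  Module.compHom N (gammaBar.toRingEquiv.toRingHom)

/-- `IsOrder M g` : the finitely generated torsion `Γ`-module `M` admits a decomposition
into nonzero cyclic torsion modules `Γ/(d_i)` with `g = ∏ d_i`; i.e. `g` is the order
(the Alexander polynomial) of `M`, well defined up to units of `Γ`. -/
def IsOrder (M : Type) [AddCommGroup M] [Module Γ M] (g : Γ) : Prop :=
  ∃ (k : ℕ) (dd : Fin k → Γ), (∀ i, dd i ≠ 0) ∧
    Nonempty (M ≃ₗ[Γ] ((i : Fin k) → Γ ⧸ Ideal.span ({dd i} : Set Γ))) ∧ g = ∏ i, dd i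

/-- The topological setup attached to a reduced polynomial `f : ℂ^{n+1} → ℂ` of degree `d`:
the middle Alexander modules `H_n(U^c;ℚ)` and `H_n(M^c;ℚ)`, the Euler characteristic of
`U`, and the (black-box) property that the peripheral complex of `f` is `Γ`-torsion. -/
structure BoundarySetup (n d : ℕ) where
  /-- the defining polynomial `f` in `n+1` complex variables -/
  f : MvPolynomial (Fin (n + 1)) ℂ
  /-- `f` is reduced -/
  f_reduced : Squarefree f
  /-- `f` has degree `d` -/
  f_degree : f.totalDegree = d
  /-- the Alexander module `H_n(U^c; ℚ)` of the hypersurface complement -/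
  HUn : GammaMod
  /-- the Alexander module `H_n(M^c; ℚ)` of the boundary manifold -/
  HMn : GammaMod
  /-- the Euler characteristic `χ(U)` of the complement `U` -/
  chiU : ℤ
  /-- the statement "the peripheral complex `R•` of `f` is a torsion `Γ`-module complex" -/
  peripheralTorsion : Prop

open Function

section Semilinear

variable {R S : Type*} [CommRing R] [CommRing S] {σ : R →+* S} {σ' : S →+* R}
  [RingHomInvPair σ σ'] [RingHomInvPair σ' σ]

theorem exact_conj {F G M N : Type*} [AddCommGroup F] [AddCommGroup G] [AddCommGroup M]
    [AddCommGroup N] [Module R F] [Module S G] [Module R M] [Module S N]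
    (e : F ≃ₛₗ[σ] G) {f : M →ₛₗ[σ] N} (hf : Injective f)
    {A : F →ₗ[R] F} {π : F →ₗ[R] M} {π' : G →ₗ[S] N} (hπ : ∀ x, π' (e x) = f (π x))
    (h : Exact A π) : Exact (e.conj A) π' := by
  intro y
  obtain ⟨x, rfl⟩ := e.surjective y
  have hrange : x ∈ Set.range A ↔ e x ∈ Set.range (e.conj A) := by
    simp [LinearEquiv.conj_apply_apply, e.symm.surjective.exists]
  rw [hπ, map_eq_zero_iff f hf, h x, hrange]

/-- The `σ`-semilinear equivalence `R^ι ≃ S^ι` applying a ring isomorphism `σ` to every coordinate.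
Conjugating by it applies `σ` to the entries of a square matrix. -/
def coordEquiv (ι : Type*) (σ : R →+* S) {σ' : S →+* R} [RingHomInvPair σ σ']
    [RingHomInvPair σ' σ] : (ι → R) ≃ₛₗ[σ] (ι → S) where
  toFun x i := σ (x i)
  invFun y i := σ' (y i)
  map_add' x y := funext fun i => map_add σ (x i) (y i)
  map_smul' r x := funext fun i => map_mul σ r (x i)
  left_inv _ := funext fun _ => RingHomInvPair.comp_apply_eq
  right_inv _ := funext fun _ => RingHomInvPair.comp_apply_eq₂

theorem det_coordEquiv_conj {ι : Type*} [Finite ι] (A : (ι → R) →ₗ[R] (ι → R)) :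
    LinearMap.det ((coordEquiv ι σ).conj A) = σ (LinearMap.det A) := by
  classical
  have := Fintype.ofFinite ι
  have hA : LinearMap.toMatrix' ((coordEquiv ι σ).conj A) = (LinearMap.toMatrix' A).map σ := by
    ext i j
    have hsingle : (coordEquiv ι σ).symm (Pi.single j 1) = Pi.single j 1 :=
      funext fun k =>
        (Pi.apply_single (fun _ => σ') (fun _ => map_zero σ') j 1 k).trans (by rw [map_one])
    rw [LinearMap.toMatrix'_apply, LinearEquiv.conj_apply_apply, hsingle]
    rfl
  rw [← LinearMap.det_toMatrix', hA, ← RingHom.mapMatrix_apply, ← RingHom.map_det,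
    LinearMap.det_toMatrix']

end Semilinear

section Presentation

variable {R : Type*} [CommRing R]
variable {F G M N P : Type*} [AddCommGroup F] [AddCommGroup G] [AddCommGroup M] [AddCommGroup N]
  [AddCommGroup P] [Module R F] [Module R G] [Module R M] [Module R N] [Module R P]

/-- The block lower triangular endomorphism `(u, v) ↦ (A u, T u + B v)` of `F × G`. -/
def lowerTriangular (A : F →ₗ[R] F) (T : F →ₗ[R] G) (B : G →ₗ[R] G) : F × G →ₗ[R] F × G :=
  (A ∘ₗ LinearMap.fst R F G).prod (T.coprod B)

theorem lowerTriangular_injective {A : F →ₗ[R] F} {B : G →ₗ[R] G} (hA : Injective A)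
    (T : F →ₗ[R] G) (hB : Injective B) : Injective (lowerTriangular A T B) := by
  rintro ⟨u, v⟩ ⟨u', v'⟩ h
  obtain ⟨hu, hv⟩ := Prod.ext_iff.1 h
  obtain rfl : u = u' := hA hu
  exact congrArg (Prod.mk u) (hB (add_left_cancel hv))

theorem det_lowerTriangular [Module.Free R F] [Module.Finite R F] [Module.Free R G]
    [Module.Finite R G] (A : F →ₗ[R] F) (T : F →ₗ[R] G) (B : G →ₗ[R] G) :
    LinearMap.det (lowerTriangular A T B) = LinearMap.det A * LinearMap.det B := by
  classical
  let b := Module.Free.chooseBasis R F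
  let c := Module.Free.chooseBasis R G
  have blocks : LinearMap.toMatrix (b.prod c) (b.prod c) (lowerTriangular A T B) =
      Matrix.fromBlocks (LinearMap.toMatrix b b A) 0 (LinearMap.toMatrix b c T)
        (LinearMap.toMatrix c c B) := by
    ext (i | i) (j | j) <;> simp [lowerTriangular, LinearMap.toMatrix_apply]
  rw [← LinearMap.det_toMatrix (b.prod c), blocks, Matrix.det_fromBlocks_zero₁₂,
    LinearMap.det_toMatrix, LinearMap.det_toMatrix]

theorem exact_lowerTriangular {A : F →ₗ[R] F} {T : F →ₗ[R] G} {B : G →ₗ[R] G} {β : G →ₗ[R] N}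
    {p : F × N →ₗ[R] M} (hBβ : Exact B β) (hp : Exact (A.prod (β ∘ₗ T)) p) :
    Exact (lowerTriangular A T B) (p ∘ₗ LinearMap.prodMap LinearMap.id β) := by
  rintro ⟨x, y⟩
  constructor
  · intro h
    obtain ⟨u, hu⟩ := (hp (x, β y)).1 h
    obtain ⟨hx, hy⟩ := Prod.ext_iff.1 hu
    have hker : β (y - T u) = 0 := by rw [map_sub, sub_eq_zero]; exact hy.symm
    obtain ⟨v, hv⟩ := (hBβ _).1 hker
    exact ⟨(u, v), Prod.ext hx (by simp [lowerTriangular, hv])⟩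
  · rintro ⟨⟨u, v⟩, huv⟩
    obtain ⟨rfl, rfl⟩ := Prod.ext_iff.1 huv
    refine (hp _).2 ⟨u, ?_⟩
    simp [lowerTriangular, hBβ.apply_apply_eq_zero]

theorem associated_det_of_exact {A B : F →ₗ[R] F} {p : F →ₗ[R] M} (hA : Injective A)
    (hB : Injective B) (hAp : Exact A p) (hBp : Exact B p) :
    Associated (LinearMap.det A) (LinearMap.det B) :=
  LinearMap.associated_det_comp_equiv (LinearMap.ker p).subtype
    ((LinearEquiv.ofInjective A hA).trans (.ofEq _ _ hAp.linearMap_ker_eq.symm))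
    ((LinearEquiv.ofInjective B hB).trans (.ofEq _ _ hBp.linearMap_ker_eq.symm))

theorem exists_exact_prod_coprod [Module.Projective R G] {i : N →ₗ[R] M} {q : M →ₗ[R] P}
    {C : F →ₗ[R] G} {γ : G →ₗ[R] P} (hi : Injective i) (hiq : Exact i q) (hq : Surjective q)
    (hCγ : Exact C γ) (hγ : Surjective γ) :
    ∃ (τ : F →ₗ[R] N) (s : G →ₗ[R] M),
      Exact (C.prod τ) (s.coprod i) ∧ Surjective (s.coprod i) := by
  obtain ⟨s, rfl⟩ := Module.projective_lifting_property q γ hq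
  have hrange (v : F) : (-(s ∘ₗ C)) v ∈ LinearMap.range i :=
    neg_mem ((hiq _).1 (hCγ.apply_apply_eq_zero v))
  let τ := LinearMap.codRestrictOfInjective (-(s ∘ₗ C)) i hi hrange
  have hτ (v : F) : i (τ v) = -s (C v) :=
    LinearMap.codRestrictOfInjective_comp_apply _ _ hi hrange v
  refine ⟨τ, s, ?exactness, ?surjectivity⟩
  case exactness =>
    rintro ⟨x, y⟩
    constructor
    · intro h
      replace h : s x + i y = 0 := h
      have hqs : (q ∘ₗ s) x = 0 := by simpa [hiq.apply_apply_eq_zero] using congrArg q h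
      obtain ⟨v, rfl⟩ := (hCγ x).1 hqs
      exact ⟨v, Prod.ext rfl (hi ((hτ v).trans (neg_eq_of_add_eq_zero_right h)))⟩
    · rintro ⟨v, hv⟩
      obtain ⟨rfl, rfl⟩ := Prod.ext_iff.1 hv
      simp [hτ]
  case surjectivity =>
    intro m
    obtain ⟨x, hx⟩ := hγ (q m)
    have hker : q (m - s x) = 0 := by rw [map_sub, sub_eq_zero]; exact hx.symm
    obtain ⟨y, hy⟩ := (hiq _).1 hker
    exact ⟨(x, y), by simp [hy]⟩

/-- Schanuel's argument: the fiber product of `-α` and `β` splits over the projective `F`. -/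
theorem exists_exact_lowerTriangular_coprod [Module.Projective R F] {B : G →ₗ[R] G}
    {β : G →ₗ[R] M} (hBβ : Exact B β) (hβ : Surjective β) (α : F →ₗ[R] M) :
    ∃ T : F →ₗ[R] G, Exact (lowerTriangular LinearMap.id T B) (α.coprod β) := by
  obtain ⟨T, hT⟩ := Module.projective_lifting_property β (-α) hβ
  have graph : Exact (LinearMap.id.prod (β ∘ₗ T)) (α.coprod LinearMap.id) := by
    rintro ⟨x, m⟩
    simp [hT, neg_eq_iff_add_eq_zero]
  have hcoprod : α.coprod LinearMap.id ∘ₗ LinearMap.prodMap LinearMap.id β = α.coprod β := by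
    ext <;> simp
  exact ⟨T, hcoprod ▸ exact_lowerTriangular hBβ graph⟩

/-- `M` has a presentation `0 → R^n → R^n → M → 0` by a square matrix whose determinant is `g` up
to a unit. This is the order of a torsion module over a principal ideal domain, in a form that
makes sense over any commutative ring. -/
def HasPresentationDet (M : Type*) [AddCommGroup M] [Module R M] (g : R) : Prop :=
  ∃ (n : ℕ) (A : (Fin n → R) →ₗ[R] (Fin n → R)) (π : (Fin n → R) →ₗ[R] M),
    Injective A ∧ Exact A π ∧ Surjective π ∧ Associated (LinearMap.det A) g

namespace HasPresentationDet

theorem of_exact [Module.Free R F] [Module.Finite R F] {A : F →ₗ[R] F} {π : F →ₗ[R] M} {g : R}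
    (hA : Injective A) (hAπ : Exact A π) (hπ : Surjective π)
    (hg : Associated (LinearMap.det A) g) : HasPresentationDet M g := by
  let e : F ≃ₗ[R] (Fin _ → R) :=
    ((Module.Free.chooseBasis R F).reindex (Fintype.equivFin _)).equivFun
  exact ⟨_, e.conj A, π ∘ₗ e.symm.toLinearMap, e.injective.comp (hA.comp e.symm.injective),
    exact_conj e (f := LinearMap.id) injective_id (by simp) hAπ, hπ.comp e.symm.surjective,
    .trans (.of_eq (LinearMap.det_conj A e)) hg⟩

theorem associated {g g' : R} (h : HasPresentationDet M g) (h' : HasPresentationDet M g') :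
    Associated g g' := by
  obtain ⟨n, A, α, hA, hAα, hα, hg⟩ := h
  obtain ⟨n', B, β, hB, hBβ, hβ, hg'⟩ := h'
  obtain ⟨S, hS⟩ := exists_exact_lowerTriangular_coprod hAα hα β
  obtain ⟨T, hT⟩ := exists_exact_lowerTriangular_coprod hBβ hβ α
  let swap := LinearEquiv.prodComm R (Fin n' → R) (Fin n → R)
  have hA' : Injective (lowerTriangular LinearMap.id S A) :=
    lowerTriangular_injective injective_id S hA
  have hS' : Exact (swap.conj (lowerTriangular LinearMap.id S A)) (α.coprod β) :=
    exact_conj swap (f := LinearMap.id) injective_id (by simp [swap, add_comm]) hS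
  have hdet := associated_det_of_exact (swap.injective.comp (hA'.comp swap.symm.injective))
    (lowerTriangular_injective injective_id T hB) hS' hT
  have hswap : LinearMap.det (swap.conj (lowerTriangular LinearMap.id S A)) = LinearMap.det A := by
    rw [LinearEquiv.conj_apply, LinearMap.comp_assoc, LinearMap.det_conj, det_lowerTriangular,
      LinearMap.det_id, one_mul]
  rw [hswap, det_lowerTriangular, LinearMap.det_id, one_mul] at hdet
  exact hg.symm.trans (hdet.trans hg')

theorem mul_of_exact_prod [Module.Free R F] [Module.Finite R F] {A : F →ₗ[R] F} {τ : F →ₗ[R] N}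
    {p : F × N →ₗ[R] M} {a b : R} (hA : Injective A) (hAp : Exact (A.prod τ) p)
    (hp : Surjective p) (ha : Associated (LinearMap.det A) a) (hN : HasPresentationDet N b) :
    HasPresentationDet M (a * b) := by
  obtain ⟨n, B, β, hB, hBβ, hβ, hb⟩ := hN
  obtain ⟨T, rfl⟩ := Module.projective_lifting_property β τ hβ
  refine of_exact (lowerTriangular_injective hA T hB) (exact_lowerTriangular hBβ hAp)
    (hp.comp (surjective_id.prodMap hβ)) ?_
  rw [det_lowerTriangular]
  exact ha.mul_mul hb

theorem mul_of_exact {i : N →ₗ[R] M} {q : M →ₗ[R] P} {b c : R} (hi : Injective i)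
    (hiq : Exact i q) (hq : Surjective q) (hP : HasPresentationDet P c)
    (hN : HasPresentationDet N b) : HasPresentationDet M (c * b) := by
  obtain ⟨n, C, γ, hC, hCγ, hγ, hc⟩ := hP
  obtain ⟨τ, s, hexact, hsurj⟩ := exists_exact_prod_coprod hi hiq hq hCγ hγ
  exact mul_of_exact_prod hC hexact hsurj hc hN

theorem map {S M' : Type*} [CommRing S] [AddCommGroup M'] [Module S M'] {σ : R →+* S}
    {σ' : S →+* R} [RingHomInvPair σ σ'] [RingHomInvPair σ' σ] {g : R}
    (h : HasPresentationDet M g) (e : M ≃ₛₗ[σ] M') : HasPresentationDet M' (σ g) := by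
  obtain ⟨n, A, π, hA, hAπ, hπ, hg⟩ := h
  let c : (Fin n → R) ≃ₛₗ[σ] (Fin n → S) := coordEquiv (Fin n) σ
  refine ⟨n, c.conj A, e.toLinearMap.comp (π.comp c.symm.toLinearMap), ?_, ?_, ?_, ?_⟩
  · exact c.injective.comp (hA.comp c.symm.injective)
  · exact exact_conj c (f := (e : M →ₛₗ[σ] M')) e.injective (by simp) hAπ
  · exact e.surjective.comp (hπ.comp c.symm.surjective)
  · exact (det_coordEquiv_conj (σ := σ) A).symm ▸ hg.map σ

theorem pi_quotient_span {ι : Type*} [Fintype ι] {a : ι → R} (ha : ∀ i, IsLeftRegular (a i)) :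
    HasPresentationDet (∀ i, R ⧸ Ideal.span {a i}) (∏ i, a i) := by
  let A : (ι → R) →ₗ[R] (ι → R) :=
    LinearMap.pi fun i => LinearMap.mulLeft R (a i) ∘ₗ LinearMap.proj i
  let π : (ι → R) →ₗ[R] (∀ i, R ⧸ Ideal.span {a i}) :=
    LinearMap.pi fun i => (Ideal.span {a i}).mkQ ∘ₗ LinearMap.proj i
  have hA : Injective A := fun x y hxy => funext fun i => ha i (congrFun hxy i)
  have hAπ : Exact A π := fun y => calc
    π y = 0 ↔ ∀ i, a i ∣ y i := by
      simp [π, funext_iff, Ideal.Quotient.eq_zero_iff_dvd]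
    _ ↔ ∃ x : ι → R, ∀ i, y i = a i * x i := Classical.skolem
    _ ↔ y ∈ Set.range A := by simp [A, funext_iff, eq_comm]
  have hπ : Surjective π := Surjective.piMap fun i => Submodule.mkQ_surjective _
  exact of_exact hA hAπ hπ (.of_eq (by simp [A, LinearMap.det_pi]))

end HasPresentationDet

theorem statement4_general [Module.Free R F] [Module.Finite R F] {ρ : F →ₗ[R] F} {τ : F →ₗ[R] N}
    {p : F × N →ₗ[R] M} {q : M →ₗ[R] P} (hρ : Injective ρ) (hp : Exact (ρ.prod τ) p)
    (hpq : Exact p q) (hq : Surjective q) {δN δM δP : R} (hN : HasPresentationDet N δN)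
    (hM : HasPresentationDet M δM) (hP : HasPresentationDet P δP) :
    Associated (LinearMap.det ρ * δP * δN) δM := by
  have hp' : Exact (ρ.prod τ) p.rangeRestrict := fun x => by rw [← hp x, Subtype.ext_iff]; rfl
  have hpq' : Exact (LinearMap.range p).subtype q := by
    rw [LinearMap.exact_iff, Submodule.range_subtype, hpq.linearMap_ker_eq]
  have hrange : HasPresentationDet (LinearMap.range p) (LinearMap.det ρ * δN) :=
    .mul_of_exact_prod hρ hp' p.surjective_rangeRestrict (.refl _) hN
  have hM' := HasPresentationDet.mul_of_exact Subtype.val_injective hpq' hq hP hrange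
  rw [mul_right_comm, mul_comm]
  exact hM'.associated hM

end Presentation

section Gamma

theorem gammaBar_gammaBar (r : Γ) : gammaBar (gammaBar r) = r :=
  LaurentPolynomial.involutive_invert r

instance : RingHomInvPair (gammaBar : Γ →+* Γ) (gammaBar : Γ →+* Γ) where
  comp_eq := RingHom.ext gammaBar_gammaBar
  comp_eq₂ := RingHom.ext gammaBar_gammaBar

/-- The identity map, as a `gammaBar`-semilinear equivalence. -/
def conjEquiv (N : Type) [AddCommGroup N] [Module Γ N] :
    N ≃ₛₗ[(gammaBar : Γ →+* Γ)] Conj N where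
  __ := AddEquiv.refl N
  map_smul' r x := congrArg (· • x) (gammaBar_gammaBar r).symm

theorem IsOrder.hasPresentationDet {N : Type} [AddCommGroup N] [Module Γ N] {g : Γ}
    (h : IsOrder N g) : HasPresentationDet N g := by
  obtain ⟨k, dd, hdd, ⟨e⟩, rfl⟩ := h
  exact (HasPresentationDet.pi_quotient_span fun i => mul_right_injective₀ (hdd i)).map e.symm

end Gamma

/-- Given the four-term exact sequence
`0 → Γ^μ →(ρ,τ) Γ^μ ⊕ \overline{H_n(U^c)} →p H_n(M^c) →q H_n(U^c) → 0`
(with `ρ` injective with torsion cokernel, `e(t) = det ρ`), one has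
`e(t)·δ_n(U,t)·δ_n(U,t⁻¹) = δ_n(M,t)` up to units of `Γ`. -/
theorem statement4 (n d : ℕ) (S : BoundarySetup n d) (htor : S.peripheralTorsion)
    (ρ : (Fin S.chiU.natAbs → Γ) →ₗ[Γ] (Fin S.chiU.natAbs → Γ))
    (τ : (Fin S.chiU.natAbs → Γ) →ₗ[Γ] Conj S.HUn.carrier)
    (p : ((Fin S.chiU.natAbs → Γ) × Conj S.HUn.carrier) →ₗ[Γ] S.HMn.carrier)
    (q : S.HMn.carrier →ₗ[Γ] S.HUn.carrier)
    (h1 : Function.Injective (LinearMap.prod ρ τ))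
    (h2 : LinearMap.range (LinearMap.prod ρ τ) = LinearMap.ker p)
    (h3 : LinearMap.range p = LinearMap.ker q)
    (h4 : Function.Surjective q)
    (h5 : Function.Injective ρ)
    (h6 : Module.IsTorsion Γ ((Fin S.chiU.natAbs → Γ) ⧸ LinearMap.range ρ))
    (δU δM : Γ) (hδU : IsOrder S.HUn.carrier δU) (hδM : IsOrder S.HMn.carrier δM) :
    Associated (LinearMap.det ρ * δU * gammaBar δU) δM :=
  statement4_general h5 (LinearMap.exact_iff.2 h2.symm) (LinearMap.exact_iff.2 h3.symm) h4
    (hδU.hasPresentationDet.map (conjEquiv _)) hδM.hasPresentationDet hδU.hasPresentationDet
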